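/- arXiv:2411.14538 — 8 statements merged into one kernel-verified Lean document; each statement's English description precedes it below -/
import Mathlib

section
/- Over the one-letter alphabet {a}, the language {a} consisting of the single string of length 1 is recognized by some one-way reversible automaton with a single accepting state (1RFA₁), but is not recognized by any one-way permutation automaton (1PerFA). -/
open scoped Classical

/-- Run a partial transition function along a word. -/
def runP {A Q : Type} (d : A → Q → Option Q) (q : Q) (w : List A) : Option Q :=
  w.foldl (fun o a => o.bind (d a)) (some q)

/-- One-way reversible finite automaton (1RFA): a partial deterministic automaton
with a single initial state and injective transition functions. -/
structure RFA (A Q : Type) where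
  start : Q
  next : A → Q → Option Q
  inj : ∀ a q q' r, next a q = some r → next a q' = some r → q = q'
  accept : Set Q

def RFA.Language {A Q : Type} (M : RFA A Q) : Set (List A) :=
  {w | ∃ qf ∈ M.accept, runP M.next M.start w = some qf}

/-- A permutation automaton (1PerFA): every transition function is a totally
defined bijection. -/
def RFA.IsPerm {A Q : Type} (M : RFA A Q) : Prop :=
  (∀ a q, (M.next a q).isSome) ∧ ∀ a r, ∃ q, M.next a q = some r

/-- One-way reversible finite automaton with multiple initial states (MRFA). -/
structure MRFA (A Q : Type) where
  init : Set Q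
  next : A → Q → Option Q
  inj : ∀ a q q' r, next a q = some r → next a q' = some r → q = q'
  accept : Set Q

def MRFA.Language {A Q : Type} (M : MRFA A Q) : Set (List A) :=
  {w | ∃ q0 ∈ M.init, ∃ qf ∈ M.accept, runP M.next q0 w = some qf}

def Rec1RFA (A : Type) (L : Set (List A)) : Prop :=
  ∃ (Q : Type) (_ : Fintype Q) (M : RFA A Q), M.Language = L

def Rec1RFA1 (A : Type) (L : Set (List A)) : Prop :=
  ∃ (Q : Type) (_ : Fintype Q) (M : RFA A Q), M.accept.ncard = 1 ∧ M.Language = L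

def Rec1PerFA (A : Type) (L : Set (List A)) : Prop :=
  ∃ (Q : Type) (_ : Fintype Q) (M : RFA A Q), M.IsPerm ∧ M.Language = L

def Rec1PerFA1 (A : Type) (L : Set (List A)) : Prop :=
  ∃ (Q : Type) (_ : Fintype Q) (M : RFA A Q),
    M.IsPerm ∧ M.accept.ncard = 1 ∧ M.Language = L

def RecMRFA (A : Type) (L : Set (List A)) : Prop :=
  ∃ (Q : Type) (_ : Fintype Q) (M : MRFA A Q), M.Language = L

/-- Sweeping reversible automaton (sRFA), given without its accepting set:
states `Qp` move rightwards, states `Qm` move leftwards; `startT` is the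
transition of the left end-marker function on the initial state, `turnL` its
restriction to `Qm`, and `turnR` is the transition function at the right
end-marker.  All transition functions are partial and injective, and the left
end-marker function is injective on the whole of `{q₀} ∪ Q₋`. -/
structure SRFA (A Qp Qm : Type) where
  start : Qp
  nextP : A → Qp → Option Qp
  nextM : A → Qm → Option Qm
  startT : Option Qp
  turnL : Qm → Option Qp
  turnR : Qp → Option Qm
  injP : ∀ a q q' r, nextP a q = some r → nextP a q' = some r → q = q'
  injM : ∀ a q q' r, nextM a q = some r → nextM a q' = some r → q = q'
  injL : ∀ q q' r, turnL q = some r → turnL q' = some r → q = q'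
  injR : ∀ q q' r, turnR q = some r → turnR q' = some r → q = q'
  startT_ne_turnL : ∀ q r, startT = some r → turnL q ≠ some r

/-- One step of a sweeping automaton on input `⊢w⊣`: a configuration is a state
together with a head position in `{0, 1, …, |w| + 1}`, where position `0` is the
left end-marker, position `i` with `1 ≤ i ≤ |w|` carries the `i`-th input
symbol, and position `|w| + 1` is the right end-marker.  The result is `none`
when the corresponding transition is undefined and the computation halts. -/
noncomputable def SRFA.step {A Qp Qm : Type} (M : SRFA A Qp Qm) (w : List A) :
    (Qp ⊕ Qm) × ℕ → Option ((Qp ⊕ Qm) × ℕ)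
  | (Sum.inl q, i) =>
      if i = 0 then
        if q = M.start then M.startT.map (fun p => (Sum.inl p, 1)) else none
      else if i = w.length + 1 then
        (M.turnR q).map (fun r => (Sum.inr r, w.length))
      else
        (w[i - 1]?.bind (fun a => M.nextP a q)).map (fun p => (Sum.inl p, i + 1))
  | (Sum.inr q, i) =>
      if i = 0 then (M.turnL q).map (fun p => (Sum.inl p, 1))
      else if i = w.length + 1 then none
      else (w[i - 1]?.bind (fun a => M.nextM a q)).map (fun r => (Sum.inr r, i - 1))

/-- The configuration reached after `n` steps of the computation on `w`,
starting in the initial state at the left end-marker (or `none` if the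
computation has halted before). -/
noncomputable def SRFA.steps {A Qp Qm : Type} (M : SRFA A Qp Qm) (w : List A) :
    ℕ → Option ((Qp ⊕ Qm) × ℕ)
  | 0 => some (Sum.inl M.start, 0)
  | n + 1 => (M.steps w n).bind (M.step w)

/-- Acceptance of an ordinary sRFA: the computation halts at the right
end-marker in an accepting state `q ∈ F ⊆ Q₊`. -/
def SRFA.AcceptsR {A Qp Qm : Type} (M : SRFA A Qp Qm) (F : Set Qp) (w : List A) : Prop :=
  ∃ n q, M.steps w n = some (Sum.inl q, w.length + 1) ∧ q ∈ F ∧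
    M.step w (Sum.inl q, w.length + 1) = none

def SRFA.LangR {A Qp Qm : Type} (M : SRFA A Qp Qm) (F : Set Qp) : Set (List A) :=
  {w | M.AcceptsR F w}

/-- Acceptance of an sRFA with acceptance at both sides: the computation halts
at either end-marker in an accepting state `c ∈ F ⊆ Q₊ ∪ Q₋`. -/
def SRFA.AcceptsB {A Qp Qm : Type} (M : SRFA A Qp Qm) (F : Set (Qp ⊕ Qm)) (w : List A) : Prop :=
  ∃ n c i, M.steps w n = some (c, i) ∧ c ∈ F ∧ (i = 0 ∨ i = w.length + 1) ∧
    M.step w (c, i) = none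

def SRFA.LangB {A Qp Qm : Type} (M : SRFA A Qp Qm) (F : Set (Qp ⊕ Qm)) : Set (List A) :=
  {w | M.AcceptsB F w}

def RecSRFA (A : Type) (L : Set (List A)) : Prop :=
  ∃ (Qp Qm : Type) (_ : Fintype Qp) (_ : Fintype Qm) (M : SRFA A Qp Qm) (F : Set Qp),
    M.LangR F = L

/-- The unary language `{a}`. -/
def singleA : Set (List Unit) := {[()]}

theorem runP_cons {A Q : Type} (d : A → Q → Option Q) {q r : Q} {a : A} (h : d a q = some r)
    (w : List A) : runP d q (a :: w) = runP d r w := by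
  simp [runP, h]

theorem runP_cons_of_eq_none {A Q : Type} (d : A → Q → Option Q) {q : Q} {a : A}
    (h : d a q = none) (w : List A) : runP d q (a :: w) = none := by
  have h_none : w.foldl (fun o a => o.bind (d a)) none = none := by
    induction w with
    | nil => rfl
    | cons b w ih => simpa using ih
  simpa [runP, h] using h_none

theorem runP_replicate {A Q : Type} (d : A → Q → Option Q) (a : A) (f : Q → Q)
    (h : ∀ q, d a q = some (f q)) (n : ℕ) (q : Q) :
    runP d q (List.replicate n a) = some (f^[n] q) := by
  induction n generalizing q with
  | zero => rfl
  | succ n ih => rw [List.replicate_succ, runP_cons d (h q), ih, Function.iterate_succ_apply]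

/-- The two-state automaton whose only transition leads from the initial state `false` to the
accepting state `true`. -/
def singleStepRFA : RFA Unit Bool where
  start := false
  next _ q := if q then none else some true
  inj := by simp +contextual
  accept := {true}

theorem singleStepRFA_language : singleStepRFA.Language = singleA := by
  ext w
  match w with
  | [] => simp [RFA.Language, singleA, singleStepRFA, runP]
  | [()] => simp [RFA.Language, singleA, singleStepRFA, runP]
  | () :: () :: w =>
    have h : runP singleStepRFA.next singleStepRFA.start (() :: () :: w) = none := by
      rw [runP_cons singleStepRFA.next (r := true) rfl]
      exact runP_cons_of_eq_none _ rfl w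
    simp [RFA.Language, singleA, h]

/-- In a permutation automaton every letter has a positive power that fixes the initial state, so
that prepending it to an accepted power of the letter preserves acceptance. -/
theorem RFA.IsPerm.exists_replicate_add_mem {A Q : Type} [Finite Q] {M : RFA A Q}
    (hM : M.IsPerm) (a : A) :
    ∃ n, 0 < n ∧ ∀ k, List.replicate k a ∈ M.Language →
      List.replicate (k + n) a ∈ M.Language := by
  choose f hf using fun q => Option.isSome_iff_exists.mp (hM.1 a q)
  have f_inj : Function.Injective f := fun q q' h => M.inj a q q' (f q) (hf q) (h ▸ hf q')
  obtain ⟨n, n_pos, hn⟩ := f_inj.mem_periodicPts M.start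
  refine ⟨n, n_pos, fun k ⟨qf, h_acc, h_run⟩ => ⟨qf, h_acc, ?_⟩⟩
  rw [runP_replicate M.next a f hf] at h_run ⊢
  rwa [Function.iterate_add_apply, hn.eq]

/-- `{a}` is recognized by a 1RFA with one accepting state, but by
no 1PerFA. -/
theorem stmt1 : Rec1RFA1 Unit singleA ∧ ¬ Rec1PerFA Unit singleA := by
  refine ⟨⟨Bool, inferInstance, singleStepRFA, Set.ncard_singleton true,
    singleStepRFA_language⟩, ?_⟩
  rintro ⟨Q, _, M, hM, hL⟩
  obtain ⟨n, n_pos, hn⟩ := hM.exists_replicate_add_mem ()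
  rw [hL] at hn
  have h_len := congrArg List.length (Set.mem_singleton_iff.mp (hn 1 rfl))
  simp at h_len
  omega
end

section
/- Over the one-letter alphabet {a}, the language (a³)* ∪ a(a³)* = { aⁿ : n ≡ 0 or 1 (mod 3) } is recognized by some one-way permutation automaton (1PerFA), but is not recognized by any one-way reversible automaton with a single accepting state (1RFA₁); in particular every 1RFA recognizing this language has at least two accepting states. -/
open scoped Classical

/-- The unary language `(a³)* ∪ a(a³)* = {aⁿ : n ≡ 0 or 1 (mod 3)}`. -/
def Lmod3 : Set (List Unit) := {w | w.length % 3 = 0 ∨ w.length % 3 = 1}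

/-- The cyclic automaton on `ZMod 3` accepting the residues `0` and `1`. -/
def cyclicRFA : RFA Unit (ZMod 3) where
  start := 0
  next _ q := some (q + 1)
  inj _ q q' r h h' := by
    rw [← h'] at h
    exact add_right_cancel (Option.some.inj h)
  accept := {0, 1}

theorem runP_cyclicRFA (q : ZMod 3) (w : List Unit) :
    runP cyclicRFA.next q w = some (q + w.length) := by
  induction w generalizing q with
  | nil => simp [runP]
  | cons a w ih =>
    have h : runP cyclicRFA.next q (a :: w) = runP cyclicRFA.next (q + 1) w := rfl
    rw [h, ih, List.length_cons]
    push_cast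
    ring_nf

theorem cyclicRFA_isPerm : cyclicRFA.IsPerm :=
  ⟨fun _ _ => rfl, fun _ r => ⟨r - 1, congrArg some (sub_add_cancel r 1)⟩⟩

theorem cyclicRFA_language : cyclicRFA.Language = Lmod3 := by
  ext w
  have h0 : ((w.length : ℕ) : ZMod 3) = 0 ↔ w.length % 3 = 0 := by
    rw [ZMod.natCast_eq_zero_iff, Nat.dvd_iff_mod_eq_zero]
  have h1 : ((w.length : ℕ) : ZMod 3) = 1 ↔ w.length % 3 = 1 := by
    rw [← Nat.cast_one, ZMod.natCast_eq_natCast_iff']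
  change (∃ qf ∈ ({0, 1} : Set (ZMod 3)), runP cyclicRFA.next 0 w = some qf) ↔
    w.length % 3 = 0 ∨ w.length % 3 = 1
  simp [runP_cyclicRFA, h0, h1]

/-- The start state and its successor are distinct accepting states of any reversible
automaton recognizing `Lmod3`. -/
theorem two_le_ncard_accept_of_language_eq_Lmod3 {Q : Type} [Finite Q] (M : RFA Unit Q)
    (hM : M.Language = Lmod3) : 2 ≤ M.accept.ncard := by
  obtain ⟨p, hp, hrun⟩ : [] ∈ M.Language := by rw [hM]; simp [Lmod3]
  obtain ⟨q, hq, hstep⟩ : [()] ∈ M.Language := by rw [hM]; simp [Lmod3]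
  have h2 : [(), ()] ∉ M.Language := by rw [hM]; simp [Lmod3]
  obtain rfl : M.start = p := Option.some.inj hrun
  replace hstep : M.next () M.start = some q := hstep
  have hne : M.start ≠ q := by
    rintro rfl
    exact h2 ⟨_, hp, by simp [runP, hstep]⟩
  exact Set.one_lt_ncard_iff_nontrivial.mpr ⟨_, hp, _, hq, hne⟩

/-- `(a³)* ∪ a(a³)*` is recognized by a 1PerFA but by no 1RFA with a
single accepting state; every 1RFA recognizing it has at least two accepting
states. -/
theorem stmt2 :
    Rec1PerFA Unit Lmod3 ∧ ¬ Rec1RFA1 Unit Lmod3 ∧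
    ∀ (Q : Type) [Fintype Q] (M : RFA Unit Q), M.Language = Lmod3 →
      2 ≤ M.accept.ncard := by
  refine ⟨⟨ZMod 3, inferInstance, cyclicRFA, cyclicRFA_isPerm, cyclicRFA_language⟩, ?_,
    fun Q _ M hM => two_le_ncard_accept_of_language_eq_Lmod3 M hM⟩
  rintro ⟨Q, _, M, hcard, hM⟩
  have := two_le_ncard_accept_of_language_eq_Lmod3 M hM
  omega
end

section
/- The following inclusions of language families are proper: 𝓛(1PerFA₁) ⊊ 𝓛(1PerFA) ⊊ 𝓛(1RFA), and 𝓛(1PerFA₁) ⊊ 𝓛(1RFA₁) ⊊ 𝓛(1RFA). That is: every language recognized by an automaton of the smaller class is recognized by one of the larger class, and for each of the four inclusions there exists a language (over some alphabet) recognized by the larger class but not by the smaller class. -/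
open scoped Classical

theorem runP_eq_iterate {Q : Type} {d : Unit → Q → Option Q} {f : Q → Q}
    (h : ∀ q, d () q = some (f q)) (q : Q) (w : List Unit) :
    runP d q w = some (f^[w.length] q) := by
  induction w generalizing q with
  | nil => rfl
  | cons a w ih =>
    have step : runP d q (a :: w) = runP d (f q) w := by
      simp only [runP, List.foldl_cons, Option.bind_some]
      rw [h]
    rw [step, ih, List.length_cons, Function.iterate_succ_apply]

theorem Rec1PerFA1.rec1PerFA {A : Type} {L : Set (List A)} (h : Rec1PerFA1 A L) :
    Rec1PerFA A L := by
  obtain ⟨Q, hQ, M, hM, -, hL⟩ := h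
  exact ⟨Q, hQ, M, hM, hL⟩

theorem Rec1PerFA1.rec1RFA1 {A : Type} {L : Set (List A)} (h : Rec1PerFA1 A L) :
    Rec1RFA1 A L := by
  obtain ⟨Q, hQ, M, -, hM, hL⟩ := h
  exact ⟨Q, hQ, M, hM, hL⟩

theorem Rec1PerFA.rec1RFA {A : Type} {L : Set (List A)} (h : Rec1PerFA A L) :
    Rec1RFA A L := by
  obtain ⟨Q, hQ, M, -, hL⟩ := h
  exact ⟨Q, hQ, M, hL⟩

theorem Rec1RFA1.rec1RFA {A : Type} {L : Set (List A)} (h : Rec1RFA1 A L) :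
    Rec1RFA A L := by
  obtain ⟨Q, hQ, M, -, hL⟩ := h
  exact ⟨Q, hQ, M, hL⟩

/-- The language of a reversible automaton with a single accepting state that contains the empty
word and a one-letter word contains the square of that letter. -/
theorem Rec1RFA1.pair_mem {A : Type} {L : Set (List A)} (h : Rec1RFA1 A L) {a : A}
    (hnil : [] ∈ L) (ha : [a] ∈ L) : [a, a] ∈ L := by
  obtain ⟨Q, _, M, hM, rfl⟩ := h
  obtain ⟨f, hf⟩ := Set.ncard_eq_one.mp hM
  simp only [RFA.Language, runP, hf, Set.mem_ofPred_eq, Set.mem_singleton_iff, exists_eq_left,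
    List.foldl_nil, List.foldl_cons, Option.bind_some, Option.some.injEq] at hnil ha ⊢
  rw [hnil] at ha ⊢
  rw [ha, Option.bind_some, ha]

/-- A permutation automaton over a unary alphabet that
accepts the empty word also accepts a nonempty word. -/
theorem Rec1PerFA.exists_ne_nil_mem {L : Set (List Unit)} (h : Rec1PerFA Unit L)
    (hnil : [] ∈ L) : ∃ w ∈ L, w ≠ [] := by
  obtain ⟨Q, _, M, hM, rfl⟩ := h
  choose f hf using fun q => Option.isSome_iff_exists.mp (hM.1 () q)
  have hinj : Function.Injective f := fun p q hpq =>
    M.inj () p q (f q) (by rw [hf, hpq]) (hf q)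
  obtain ⟨n, hn, hper⟩ := hinj.mem_periodicPts M.start
  obtain ⟨qf, hqf, hrun⟩ := hnil
  refine ⟨List.replicate n (), ⟨qf, hqf, ?_⟩, ?_⟩
  · rw [runP_eq_iterate hf, List.length_replicate, hper, ← hrun]
    rfl
  · intro h0
    have := congrArg List.length h0
    simp only [List.length_replicate, List.length_nil] at this
    omega

theorem rec1RFA1_singleton_nil : Rec1RFA1 Unit {[]} := by
  refine ⟨Unit, inferInstance, ⟨(), fun _ _ => none, by simp, {()}⟩, Set.ncard_singleton _, ?_⟩
  have run_cons (a : Unit) (w : List Unit) :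
      runP (fun _ _ => none : Unit → Unit → Option Unit) () (a :: w) = none := by
    simp only [runP, List.foldl_cons, Option.bind_some]
    induction w with
    | nil => rfl
    | cons b w ih => exact ih
  ext w
  cases w with
  | nil => simp [RFA.Language, runP]
  | cons a w => simp [RFA.Language, run_cons]

theorem not_rec1PerFA_singleton_nil : ¬ Rec1PerFA Unit {[]} := fun h => by
  obtain ⟨w, hw, hne⟩ := h.exists_ne_nil_mem rfl
  exact hne hw

theorem rec1PerFA_length_mod_three :
    Rec1PerFA Unit {w | (w.length : ZMod 3) ≠ 2} := by
  refine ⟨ZMod 3, inferInstance, ⟨0, fun _ q => some (q + 1), ?_, {q | q ≠ 2}⟩,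
    ⟨fun _ _ => rfl, fun _ r => ⟨r - 1, by simp⟩⟩, ?_⟩
  · intro _ q q' r h h'
    exact add_right_cancel (Option.some.inj (h.trans h'.symm))
  · ext w
    simp [RFA.Language, runP_eq_iterate (d := fun _ q => some (q + 1)) (f := (· + (1 : ZMod 3)))
      fun _ => rfl]

theorem not_rec1RFA1_length_mod_three :
    ¬ Rec1RFA1 Unit {w | (w.length : ZMod 3) ≠ 2} := fun h =>
  h.pair_mem (a := ()) (by simp; decide) (by simp; decide) (by simp)

/-- the proper inclusions
`𝓛(1PerFA₁) ⊊ 𝓛(1PerFA) ⊊ 𝓛(1RFA)` and `𝓛(1PerFA₁) ⊊ 𝓛(1RFA₁) ⊊ 𝓛(1RFA)`. -/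
theorem stmt3 :
    ((∀ (A : Type) (L : Set (List A)), Rec1PerFA1 A L → Rec1PerFA A L) ∧
      ∃ (A : Type) (L : Set (List A)), Rec1PerFA A L ∧ ¬ Rec1PerFA1 A L) ∧
    ((∀ (A : Type) (L : Set (List A)), Rec1PerFA A L → Rec1RFA A L) ∧
      ∃ (A : Type) (L : Set (List A)), Rec1RFA A L ∧ ¬ Rec1PerFA A L) ∧
    ((∀ (A : Type) (L : Set (List A)), Rec1PerFA1 A L → Rec1RFA1 A L) ∧
      ∃ (A : Type) (L : Set (List A)), Rec1RFA1 A L ∧ ¬ Rec1PerFA1 A L) ∧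
    ((∀ (A : Type) (L : Set (List A)), Rec1RFA1 A L → Rec1RFA A L) ∧
      ∃ (A : Type) (L : Set (List A)), Rec1RFA A L ∧ ¬ Rec1RFA1 A L) := by
  refine ⟨⟨fun _ _ h => h.rec1PerFA, Unit, _, rec1PerFA_length_mod_three,
      fun h => not_rec1RFA1_length_mod_three h.rec1RFA1⟩,
    ⟨fun _ _ h => h.rec1RFA, Unit, _, rec1RFA1_singleton_nil.rec1RFA,
      not_rec1PerFA_singleton_nil⟩,
    ⟨fun _ _ h => h.rec1RFA1, Unit, _, rec1RFA1_singleton_nil,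
      fun h => not_rec1PerFA_singleton_nil h.rec1PerFA⟩,
    ⟨fun _ _ h => h.rec1RFA, Unit, _, rec1PerFA_length_mod_three.rec1RFA,
      not_rec1RFA1_length_mod_three⟩⟩
end

section
/- One-way permutation automata (1PerFA) and one-way reversible automata with a single accepting state (1RFA₁) are incomparable in expressive power: there exists a language recognized by some 1PerFA but by no 1RFA₁, and there exists a language recognized by some 1RFA₁ but by no 1PerFA. -/
open scoped Classical

/-- If the transition on `a` is the total function `f`, then reading `aⁿ` iterates `f`. -/
theorem runP_replicate_of_eq_some {A Q : Type} {d : A → Q → Option Q} {a : A} {f : Q → Q}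
    (hf : ∀ q, d a q = some (f q)) (q : Q) (n : ℕ) :
    runP d q (List.replicate n a) = some (f^[n] q) := by
  induction n generalizing q with
  | zero => rfl
  | succ n ih =>
    rw [Function.iterate_succ_apply, ← ih]
    simp [runP, List.replicate_succ, hf]

/-- A 1RFA₁ that accepts both `ε` and `a` accepts `aa`, since it loops on its accepting state. -/
theorem RFA.pair_mem_language_of_ncard_accept {A Q : Type} (M : RFA A Q)
    (hM : M.accept.ncard = 1) {a : A} (h0 : [] ∈ M.Language) (h1 : [a] ∈ M.Language) :
    [a, a] ∈ M.Language := by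
  obtain ⟨f, hf⟩ := Set.ncard_eq_one.mp hM
  simp only [RFA.Language, runP, hf, Set.mem_singleton_iff, Set.mem_ofPred_eq, exists_eq_left,
    List.foldl_nil, List.foldl_cons, Option.bind_some, Option.some.injEq] at h0 h1 ⊢
  subst h0
  simp [h1]

/-- A finite permutation automaton accepting `ε` accepts a positive power of each symbol. -/
theorem RFA.IsPerm.exists_replicate_mem_language {A Q : Type} [Finite Q] {M : RFA A Q}
    (hM : M.IsPerm) (h0 : [] ∈ M.Language) (a : A) :
    ∃ n, 0 < n ∧ List.replicate n a ∈ M.Language := by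
  choose f hf using fun q => Option.isSome_iff_exists.mp (hM.1 a q)
  have hinj : Function.Injective f := fun q q' h =>
    M.inj a q q' (f q) (hf q) (h ▸ hf q')
  obtain ⟨n, hn, hper⟩ := hinj.mem_periodicPts M.start
  obtain ⟨r, hr, hrun⟩ := h0
  refine ⟨n, hn, r, hr, ?_⟩
  rw [runP_replicate_of_eq_some hf, hper.eq, ← hrun]
  rfl

/-- The unary automaton counting modulo three, accepting the residues `0` and `1`. -/
def modThreeRFA : RFA Unit (ZMod 3) where
  start := 0
  next _ q := some (q + 1)
  inj _ _ _ _ h h' := add_right_cancel (Option.some.inj (h.trans h'.symm))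
  accept := {0, 1}

theorem modThreeRFA_isPerm : modThreeRFA.IsPerm :=
  ⟨fun _ _ => rfl, fun _ r => ⟨r - 1, congrArg some (sub_add_cancel r 1)⟩⟩

theorem not_rec1RFA1_modThreeRFA_language : ¬ Rec1RFA1 Unit modThreeRFA.Language := by
  rintro ⟨Q, _, M, hM, hL⟩
  have h := M.pair_mem_language_of_ncard_accept hM (a := ())
    (hL ▸ ⟨0, Or.inl rfl, rfl⟩) (hL ▸ ⟨1, Or.inr rfl, rfl⟩)
  rw [hL] at h
  obtain ⟨q, hq, hrun⟩ := h
  obtain rfl : (0 + 1 + 1 : ZMod 3) = q := Option.some.inj hrun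
  rcases hq with hq | hq
  · exact absurd hq (by decide)
  · exact absurd (Set.mem_singleton_iff.mp hq) (by decide)

/-- The one-state automaton without transitions, accepting only the empty word. -/
def emptyWordRFA : RFA Unit Unit where
  start := ()
  next _ _ := none
  inj _ _ _ _ h := nomatch h
  accept := {()}

theorem not_rec1PerFA_emptyWordRFA_language : ¬ Rec1PerFA Unit emptyWordRFA.Language := by
  rintro ⟨Q, _, M, hM, hL⟩
  obtain ⟨n, hn, h⟩ := hM.exists_replicate_mem_language (hL ▸ ⟨(), rfl, rfl⟩) ()
  rw [hL] at h
  obtain ⟨_, _, hrun⟩ := h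
  obtain ⟨m, rfl⟩ := Nat.exists_eq_add_of_lt hn
  have hnone : ∀ k, List.foldl (fun o a => o.bind (emptyWordRFA.next a)) none
      (List.replicate k ()) = none := fun k => by
    induction k with
    | zero => rfl
    | succ k ih => exact ih
  simp only [zero_add, runP, List.replicate_succ, List.foldl_cons] at hrun
  exact nomatch (hnone m).symm.trans hrun

/-- 1PerFA and 1RFA₁ are incomparable in expressive power. -/
theorem stmt4 :
    (∃ (A : Type) (L : Set (List A)), Rec1PerFA A L ∧ ¬ Rec1RFA1 A L) ∧
    (∃ (A : Type) (L : Set (List A)), Rec1RFA1 A L ∧ ¬ Rec1PerFA A L) :=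
  ⟨⟨Unit, modThreeRFA.Language, ⟨ZMod 3, inferInstance, modThreeRFA, modThreeRFA_isPerm, rfl⟩,
      not_rec1RFA1_modThreeRFA_language⟩,
    ⟨Unit, emptyWordRFA.Language,
      ⟨Unit, inferInstance, emptyWordRFA, Set.ncard_singleton (), rfl⟩,
      not_rec1PerFA_emptyWordRFA_language⟩⟩
end

section
/- (Pin's lemma) Let L be a language recognized by some one-way reversible automaton with multiple initial states (MRFA), and suppose there are strings x, z ∈ Σ* and a nonempty string y ∈ Σ⁺ such that x yⁿ z ∈ L for every n ≥ 1. Then xz ∈ L. -/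
open scoped Classical

theorem runP_cons_eq_some {A Q : Type} {d : A → Q → Option Q} {q r : Q} {a : A} {w : List A} :
    runP d q (a :: w) = some r ↔ ∃ p, d a q = some p ∧ runP d p w = some r := by
  have foldl_none : w.foldl (fun o a => o.bind (d a)) (none : Option Q) = none := by
    induction w with
    | nil => rfl
    | cons b w ih => simpa using ih
  cases h : d a q with
  | none => simp [runP, h, foldl_none]
  | some p => simp [runP, h]

theorem runP_append_eq_some {A Q : Type} {d : A → Q → Option Q} {q r : Q} {u v : List A} :
    runP d q (u ++ v) = some r ↔ ∃ p, runP d q u = some p ∧ runP d p v = some r := by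
  induction u generalizing q with
  | nil => simp [runP]
  | cons a u ih =>
    simp only [List.cons_append, runP_cons_eq_some, ih]
    grind

/-- A partial injection of a finite type extends to a permutation. -/
theorem exists_perm_extending {Q : Type} [Finite Q] (f : Q → Option Q)
    (hf : ∀ q q' r, f q = some r → f q' = some r → q = q') :
    ∃ σ : Equiv.Perm Q, ∀ q r, f q = some r → σ q = r := by
  let g : {q // (f q).isSome} → Q := fun q => (f q).get q.2
  have hg : Function.Injective g := fun q q' h =>
    Subtype.ext (hf q q' (g q) (Option.some_get q.2).symm
      (h ▸ (Option.some_get q'.2).symm))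
  let e : {q // (f q).isSome} ≃ {r // r ∈ Set.range g} := Equiv.ofInjective g hg
  refine ⟨e.extendSubtype, fun q r h => ?_⟩
  have hq : (f q).isSome := by simp [h]
  rw [Equiv.extendSubtype_apply_of_mem e q hq]
  simp [e, g, h]

/-- If permutations extend the transition functions, then their composition along a word
extends the run along that word. -/
theorem prod_perm_apply_of_runP_eq_some {A Q : Type} {d : A → Q → Option Q}
    {σ : A → Equiv.Perm Q} (hσ : ∀ a q r, d a q = some r → σ a q = r) {w : List A} {q r : Q}
    (h : runP d q w = some r) : (w.map σ).reverse.prod q = r := by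
  induction w generalizing q with
  | nil => simpa [runP] using h
  | cons a w ih =>
    obtain ⟨p, hp, hr⟩ := runP_cons_eq_some.1 h
    simpa [hσ a q p hp] using ih hr

theorem prod_reverse_map_flatten_replicate {A G : Type} [Group G] (σ : A → G) (y : List A)
    (n : ℕ) :
    ((List.replicate n y).flatten.map σ).reverse.prod = (y.map σ).reverse.prod ^ n := by
  induction n with
  | zero => simp
  | succ n ih =>
    rw [List.replicate_succ, List.flatten_cons, List.map_append, List.reverse_append,
      List.prod_append, ih, pow_succ]

/-- Pin's lemma: if an MRFA accepts `x yⁿ z` for every `n ≥ 1`,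
where `y` is nonempty, then it accepts `xz`. -/
theorem stmt5 (A Q : Type) [Fintype Q] (M : MRFA A Q)
    (x y z : List A) (hy : y ≠ [])
    (h : ∀ n : ℕ, 1 ≤ n → x ++ (List.replicate n y).flatten ++ z ∈ M.Language) :
    x ++ z ∈ M.Language := by
  choose σ hσ using fun a => exists_perm_extending (M.next a) (M.inj a)
  obtain ⟨q0, hq0, qf, hqf, hrun⟩ := h (Fintype.card (Equiv.Perm Q)) Fintype.card_pos
  obtain ⟨r, hxy, hz⟩ := runP_append_eq_some.1 hrun
  obtain ⟨p, hx, hloop⟩ := runP_append_eq_some.1 hxy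
  have hpr := prod_perm_apply_of_runP_eq_some hσ hloop
  rw [prod_reverse_map_flatten_replicate, pow_card_eq_one, Equiv.Perm.one_apply] at hpr
  exact ⟨q0, hq0, qf, hqf, runP_append_eq_some.2 ⟨p, hx, hpr ▸ hz⟩⟩
end

section
/- For every sweeping reversible automaton with acceptance at both sides, with state sets P₊ and P₋ and accepting states E ⊆ P₊ ∪ P₋, there exists an ordinary sweeping reversible automaton (accepting only at the right end-marker) recognizing the same language, whose state sets are Q₊ = P₊ ∪ { p′ : p ∈ E ∩ P₋ } (where p′ is a fresh copy of p) and Q₋ = P₋; in particular |Q₊| = |P₊| + |E ∩ P₋| and |Q₋| = |P₋|. -/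
open scoped Classical

namespace SRFA

variable {A Pp Pm : Type}

/-- The automaton that sweeps right once over every input without changing its state. -/
def sweepRight (q : Pp) : SRFA A Pp Pm where
  start := q
  nextP _ p := some p
  nextM _ _ := none
  startT := some q
  turnL _ := none
  turnR _ := none
  injP := by simp
  injM := by simp
  injL := by simp
  injR := by simp
  startT_ne_turnL := by simp

theorem sweepRight_steps (q : Pp) (w : List A) (j : ℕ) (hj : j ≤ w.length) :
    (sweepRight q : SRFA A Pp Pm).steps w (j + 1) = some (Sum.inl q, j + 1) := by
  induction j with
  | zero => simp [steps, step, sweepRight]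
  | succ j ih =>
    rw [steps, ih (by omega)]
    have hlt : j < w.length := hj
    simp [step, sweepRight, hlt, hlt.ne]

theorem sweepRight_langR (q : Pp) :
    (sweepRight q : SRFA A Pp Pm).LangR Set.univ = Set.univ :=
  Set.eq_univ_of_forall fun w =>
    ⟨_, q, sweepRight_steps q w w.length le_rfl, trivial, by simp [step, sweepRight]⟩

variable (M : SRFA A Pp Pm) (E : Set (Pp ⊕ Pm))

/-- The automaton that, instead of accepting at the left end-marker in a state `p ∈ E`,
sweeps right in a fresh copy of `p`. -/
noncomputable def acceptRight : SRFA A (Pp ⊕ {p : Pm // Sum.inr p ∈ E}) Pm where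
  start := Sum.inl M.start
  nextP a
    | Sum.inl q => (M.nextP a q).map Sum.inl
    | Sum.inr p => some (Sum.inr p)
  nextM := M.nextM
  startT := M.startT.map Sum.inl
  turnL p :=
    match M.turnL p with
    | some q => some (Sum.inl q)
    | none => if h : Sum.inr p ∈ E then some (Sum.inr ⟨p, h⟩) else none
  turnR
    | Sum.inl q => M.turnR q
    | Sum.inr _ => none
  injP := by
    rintro a (q | q) (q' | q') (r | r) <;> simp
    · exact M.injP a q q' r
    · rintro rfl rfl; rfl
  injM := M.injM
  injL := by
    rintro q q' (r | r) h h'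
    · refine M.injL q q' r ?_ ?_
      · revert h; cases M.turnL q <;> simp
      · revert h'; cases M.turnL q' <;> simp
    · have key (p : Pm) : (match M.turnL p with
          | some q => some (Sum.inl q)
          | none => if h : Sum.inr p ∈ E then some (Sum.inr ⟨p, h⟩) else none :
            Option (Pp ⊕ {p : Pm // Sum.inr p ∈ E})) = some (Sum.inr r) → p = r := by
        cases M.turnL p <;> simp
        rintro _ rfl; rfl
      exact (key q h).trans (key q' h').symm
  injR := by
    rintro (q | q) (q' | q') r <;> simp
    exact M.injR q q' r
  startT_ne_turnL := by
    rintro q (r | r) h h'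
    · refine M.startT_ne_turnL q r (by simpa using h) ?_
      revert h'; cases M.turnL q <;> simp
    · simp at h

/-- The accepting states of `acceptRight`. -/
def acceptRightSet : Set (Pp ⊕ {p : Pm // Sum.inr p ∈ E}) :=
  {q | ∀ p, q = Sum.inl p → Sum.inl p ∈ E}

/-- Configurations of `M` regarded as configurations of `M.acceptRight E`. -/
def embedConfig (c : (Pp ⊕ Pm) × ℕ) : ((Pp ⊕ {p : Pm // Sum.inr p ∈ E}) ⊕ Pm) × ℕ :=
  (c.1.map Sum.inl id, c.2)

variable {M E} {w : List A}

theorem acceptRight_step {c : (Pp ⊕ Pm) × ℕ}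
    (hc : M.step w c = none → ∀ p, Sum.inr p ∈ E → c ≠ (Sum.inr p, 0)) :
    (M.acceptRight E).step w (embedConfig E c) = (M.step w c).map (embedConfig E) := by
  obtain ⟨q | q, i⟩ := c
  · by_cases h0 : i = 0
    · by_cases hq : q = M.start <;>
        simp [step, embedConfig, acceptRight, h0, hq, Function.comp_def]
    · by_cases h1 : i = w.length + 1
      · simp [step, embedConfig, acceptRight, h1, Function.comp_def]
      · cases hw : w[i - 1]? <;>
          simp [step, embedConfig, acceptRight, h0, h1, hw, Function.comp_def]
  · by_cases h0 : i = 0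
    · subst h0
      cases hq : M.turnL q with
      | none =>
        have hE : Sum.inr q ∉ E := fun h => hc (by simp [step, hq]) q h rfl
        simp [step, embedConfig, acceptRight, hq, hE]
      | some r => simp [step, embedConfig, acceptRight, hq]
    · by_cases h1 : i = w.length + 1
      · simp [step, embedConfig, h1]
      · cases hw : w[i - 1]? <;>
          simp [step, embedConfig, acceptRight, h0, h1, hw, Function.comp_def]

theorem acceptRight_step_of_some {c d : (Pp ⊕ Pm) × ℕ} (h : M.step w c = some d) :
    (M.acceptRight E).step w (embedConfig E c) = some (embedConfig E d) := by
  rw [acceptRight_step (by simp [h]), h, Option.map_some]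

theorem acceptRight_step_of_none {c : (Pp ⊕ Pm) × ℕ} (h : M.step w c = none)
    (hc : ∀ p, Sum.inr p ∈ E → c ≠ (Sum.inr p, 0)) :
    (M.acceptRight E).step w (embedConfig E c) = none := by
  rw [acceptRight_step fun _ => hc, h, Option.map_none]

theorem acceptRight_step_inr_zero {p : Pm} (hp : Sum.inr p ∈ E)
    (h : M.step w (Sum.inr p, 0) = none) :
    (M.acceptRight E).step w (Sum.inr p, 0) = some (Sum.inl (Sum.inr ⟨p, hp⟩), 1) := by
  simp_all [step, acceptRight]

theorem acceptRight_steps_of_some {n : ℕ} {c : (Pp ⊕ Pm) × ℕ} (h : M.steps w n = some c) :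
    (M.acceptRight E).steps w n = some (embedConfig E c) := by
  induction n generalizing c with
  | zero =>
    obtain rfl : (Sum.inl M.start, 0) = c := Option.some.inj h
    rfl
  | succ n ih =>
    obtain ⟨d, hd, hdc⟩ := Option.bind_eq_some_iff.mp h
    rw [steps, ih hd]
    exact acceptRight_step_of_some hdc

theorem acceptRight_steps_copy {n : ℕ} {p : {p : Pm // Sum.inr p ∈ E}}
    (h : (M.acceptRight E).steps w n = some (Sum.inl (Sum.inr p), 1)) (j : ℕ)
    (hj : j ≤ w.length) :
    (M.acceptRight E).steps w (n + j) = some (Sum.inl (Sum.inr p), j + 1) := by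
  induction j with
  | zero => exact h
  | succ j ih =>
    rw [← add_assoc, steps, ih (by omega)]
    have hlt : j < w.length := hj
    simp [step, acceptRight, hlt, hlt.ne]

theorem steps_invariant {n : ℕ} {c : Pp ⊕ Pm} {i : ℕ} (h : M.steps w n = some (c, i)) :
    (∀ q, c = Sum.inl q → i = 0 → q = M.start) ∧ (∀ p, c = Sum.inr p → i ≤ w.length) := by
  induction n generalizing c i with
  | zero =>
    obtain ⟨rfl, rfl⟩ : Sum.inl M.start = c ∧ 0 = i := by simpa [steps] using h
    simp
  | succ n ih =>
    obtain ⟨⟨d, k⟩, hd, hdc⟩ := Option.bind_eq_some_iff.mp h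
    have hk := (ih hd).2
    obtain q | q := d <;> simp only [step] at hdc <;> split_ifs at hdc <;>
      obtain ⟨r, -, hr⟩ := Option.map_eq_some_iff.mp hdc <;> grind

theorem acceptRight_steps_cases {n : ℕ} {c : ((Pp ⊕ {p : Pm // Sum.inr p ∈ E}) ⊕ Pm) × ℕ}
    (h : (M.acceptRight E).steps w n = some c) :
    (∃ d, c = embedConfig E d ∧ M.steps w n = some d) ∨
      (∃ p, c.1 = Sum.inl (Sum.inr p)) ∧ 0 < c.2 ∧ M.AcceptsB E w := by
  induction n generalizing c with
  | zero => exact Or.inl ⟨(Sum.inl M.start, 0), (Option.some.inj h).symm, rfl⟩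
  | succ n ih =>
    obtain ⟨d, hd, hdc⟩ := Option.bind_eq_some_iff.mp h
    obtain ⟨e, rfl, he⟩ | ⟨⟨p, hp⟩, hpos, hacc⟩ := ih hd
    · rcases hs : M.step w e with _ | f
      · by_cases hc : ∃ p, Sum.inr p ∈ E ∧ e = (Sum.inr p, 0)
        · obtain ⟨p, hp, rfl⟩ := hc
          obtain rfl := Option.some.inj ((acceptRight_step_inr_zero hp hs).symm.trans hdc)
          exact Or.inr ⟨⟨_, rfl⟩, one_pos, n, _, _, he, hp, Or.inl rfl, hs⟩
        · push Not at hc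
          simp [acceptRight_step_of_none hs hc] at hdc
      · rw [acceptRight_step_of_some hs] at hdc
        exact Or.inl ⟨f, (Option.some.inj hdc).symm, by rw [steps, he]; exact hs⟩
    · refine Or.inr ?_
      obtain ⟨d, k⟩ := d
      obtain rfl : d = _ := hp
      simp only [step, if_neg hpos.ne'] at hdc
      split_ifs at hdc
      · simp [acceptRight] at hdc
      · simp only [acceptRight, Option.map_eq_some_iff, Option.bind_eq_some_iff] at hdc
        obtain ⟨q, ⟨a, -, hq⟩, rfl⟩ := hdc
        exact ⟨⟨p, by simpa using hq.symm⟩, Nat.succ_pos _, hacc⟩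

theorem acceptRight_langR (hE : M.startT = none → Sum.inl M.start ∉ E) :
    (M.acceptRight E).LangR (acceptRightSet E) = M.LangB E := by
  ext w
  constructor
  · rintro ⟨n, q, hn, hq, hstep⟩
    obtain ⟨⟨d, i⟩, hd, hM⟩ | ⟨-, -, hacc⟩ := acceptRight_steps_cases hn
    · obtain d | d := d
      · obtain ⟨rfl, rfl⟩ : q = Sum.inl d ∧ w.length + 1 = i := by
          simpa [embedConfig] using hd
        refine ⟨n, _, _, hM, hq d rfl, Or.inr rfl, ?_⟩
        rcases hs : M.step w (Sum.inl d, w.length + 1) with _ | f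
        · rfl
        · have := acceptRight_step_of_some (E := E) hs
          exact absurd (this.symm.trans hstep) (by simp)
      · simp [embedConfig] at hd
    · exact hacc
  · rintro ⟨n, c, i, hn, hc, hi, hstep⟩
    have hinv := steps_invariant hn
    have hN := acceptRight_steps_of_some (E := E) hn
    obtain q | p := c
    · obtain rfl | rfl := hi
      · obtain rfl := hinv.1 q rfl rfl
        exact absurd hc (hE (by simpa [step] using hstep))
      · refine ⟨n, Sum.inl q, hN, fun p hp => Sum.inl.inj hp ▸ hc, ?_⟩
        exact acceptRight_step_of_none hstep (by simp)
    · obtain rfl : i = 0 := hi.resolve_right (by have := hinv.2 p rfl; omega)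
      have hturn : (M.acceptRight E).steps w (n + 1) =
          some (Sum.inl (Sum.inr ⟨p, hc⟩), 1) := by
        rw [steps, hN]
        exact acceptRight_step_inr_zero hc hstep
      exact ⟨_, _, acceptRight_steps_copy hturn w.length le_rfl, by simp [acceptRightSet],
        by simp [step, acceptRight]⟩

end SRFA

/-- every sRFA with acceptance at both sides, with states
`P₊ ∪ P₋` and accepting states `E`, is equivalent to an ordinary sRFA with
states `Q₊ = P₊ ∪ {p' : p ∈ E ∩ P₋}` and `Q₋ = P₋`; in particular
`|Q₊| = |P₊| + |E ∩ P₋|` and `|Q₋| = |P₋|`. -/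
theorem stmt6 (A Pp Pm : Type) [Fintype Pp] [Fintype Pm]
    (M : SRFA A Pp Pm) (E : Set (Pp ⊕ Pm)) :
    ∃ (N : SRFA A (Pp ⊕ {p : Pm // Sum.inr p ∈ E}) Pm)
      (F : Set (Pp ⊕ {p : Pm // Sum.inr p ∈ E})),
      N.LangR F = M.LangB E ∧
      Nat.card (Pp ⊕ {p : Pm // Sum.inr p ∈ E}) =
        Nat.card Pp + Set.ncard {p : Pm | Sum.inr p ∈ E} := by
  have hcard : Nat.card (Pp ⊕ {p : Pm // Sum.inr p ∈ E}) =
      Nat.card Pp + Set.ncard {p : Pm | Sum.inr p ∈ E} := Nat.card_sum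
  by_cases hE : M.startT = none ∧ Sum.inl M.start ∈ E
  · refine ⟨SRFA.sweepRight (Sum.inl M.start), Set.univ, ?_, hcard⟩
    rw [SRFA.sweepRight_langR, eq_comm]
    exact Set.eq_univ_of_forall fun w =>
      ⟨0, _, 0, rfl, hE.2, Or.inl rfl, by simp [SRFA.step, hE.1]⟩
  · exact ⟨M.acceptRight E, SRFA.acceptRightSet E,
      SRFA.acceptRight_langR fun h h' => hE ⟨h, h'⟩, hcard⟩
end

section
/- Over the one-letter alphabet {a}, the language (aa)* ∪ {a} = { aⁿ : n is even } ∪ {a} is not recognized by any one-way reversible automaton (1RFA). -/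
open scoped Classical

/-- The unary language `(aa)* ∪ {a}`. -/
def LevenOrA : Set (List Unit) := {w | w.length % 2 = 0 ∨ w = [()]}

/-- The state reached from `q` after reading `n` copies of the only letter. -/
def unaryRun {Q : Type} (d : Unit → Q → Option Q) (q : Q) (n : ℕ) : Option Q :=
  runP d q (List.replicate n ())

theorem unaryRun_succ {Q : Type} (d : Unit → Q → Option Q) (q : Q) (n : ℕ) :
    unaryRun d q (n + 1) = (unaryRun d q n).bind (d ()) := by
  simp only [unaryRun, runP, List.replicate_succ', List.foldl_append, List.foldl_cons,
    List.foldl_nil]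

theorem unaryRun_add_congr {Q : Type} {d : Unit → Q → Option Q} {q : Q} {i j : ℕ}
    (h : unaryRun d q i = unaryRun d q j) (k : ℕ) :
    unaryRun d q (i + k) = unaryRun d q (j + k) := by
  induction k with
  | zero => exact h
  | succ k ih => rw [← add_assoc, ← add_assoc, unaryRun_succ, unaryRun_succ, ih]

theorem unaryRun_isSome_of_le {Q : Type} {d : Unit → Q → Option Q} {q : Q} {m n : ℕ}
    (hmn : m ≤ n) (h : (unaryRun d q n).isSome) : (unaryRun d q m).isSome := by
  induction n, hmn using Nat.le_induction with
  | base => exact h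
  | succ n _ ih =>
    rw [unaryRun_succ] at h
    exact ih (Option.isSome_of_isSome_bind h)

/-- A reversible automaton whose run on the unary words never halts returns to its initial state. -/
theorem RFA.exists_pos_unaryRun_eq_start {Q : Type} [Finite Q] (M : RFA Unit Q)
    (hdef : ∀ n, (unaryRun M.next M.start n).isSome) :
    ∃ p, 0 < p ∧ unaryRun M.next M.start p = unaryRun M.next M.start 0 := by
  have cancel : ∀ k p, unaryRun M.next M.start (p + k) = unaryRun M.next M.start k →
      unaryRun M.next M.start p = unaryRun M.next M.start 0 := by
    intro k p h
    induction k with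
    | zero => exact h
    | succ k ih =>
      apply ih
      obtain ⟨r, hr⟩ := Option.isSome_iff_exists.mp (hdef (k + 1))
      obtain ⟨x, hx⟩ := Option.isSome_iff_exists.mp (hdef (p + k))
      obtain ⟨y, hy⟩ := Option.isSome_iff_exists.mp (hdef k)
      rw [← add_assoc, hr, unaryRun_succ, hx, Option.bind_some] at h
      rw [unaryRun_succ, hy, Option.bind_some] at hr
      rw [hx, hy, M.inj () x y r h hr]
  obtain ⟨i, j, hij, h⟩ := Finite.exists_ne_map_eq_of_infinite (unaryRun M.next M.start)
  rcases hij.lt_or_gt with hlt | hlt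
  · exact ⟨j - i, by omega, cancel i _ (by rw [Nat.sub_add_cancel hlt.le, h])⟩
  · exact ⟨i - j, by omega, cancel j _ (by rw [Nat.sub_add_cancel hlt.le, h])⟩

/-- `(aa)* ∪ {a}` is not recognized by any 1RFA. -/
theorem stmt7 : ¬ Rec1RFA Unit LevenOrA := by
  rintro ⟨Q, _, M, hM⟩
  have accepts_iff : ∀ n, (∃ qf ∈ M.accept, unaryRun M.next M.start n = some qf) ↔
      (n % 2 = 0 ∨ n = 1) := by
    intro n
    have h := Set.ext_iff.mp hM (List.replicate n ())
    have hone : List.replicate n () = [()] ↔ n = 1 :=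
      ⟨fun e => by simpa using congrArg List.length e, fun e => by rw [e]; rfl⟩
    simpa only [LevenOrA, RFA.Language, Set.mem_ofPred_eq, List.length_replicate, hone,
      unaryRun] using h
  have hdef : ∀ n, (unaryRun M.next M.start n).isSome := by
    intro n
    obtain ⟨qf, -, h⟩ := (accepts_iff (2 * n)).mpr (by omega)
    exact unaryRun_isSome_of_le (by omega) (Option.isSome_iff_exists.mpr ⟨qf, h⟩)
  obtain ⟨p, hp, hperiod⟩ := M.exists_pos_unaryRun_eq_start hdef
  have hodd : unaryRun M.next M.start (p + (p + 1)) = unaryRun M.next M.start 1 :=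
    (unaryRun_add_congr hperiod (p + 1)).trans
      ((congrArg _ (Nat.zero_add (p + 1))).trans (unaryRun_add_congr hperiod 1))
  have h := (accepts_iff (p + (p + 1))).mp (hodd ▸ (accepts_iff 1).mpr (Or.inr rfl))
  omega
end

section
/- Over the one-letter alphabet {a}, the language (aa)* ∪ {a} = { aⁿ : n is even } ∪ {a} is recognized by some sweeping reversible automaton (sRFA). -/
open scoped Classical

/-- Right-moving states: the parity of the number of letters read in the first sweep, and the
state `single` of the last sweep, entered only on the input `a`. -/
inductive RightState
  | even
  | odd
  | single

noncomputable instance : Fintype RightState :=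
  ⟨{.even, .odd, .single}, by rintro (_ | _ | _) <;> simp⟩

/-- Left-moving states: `fresh` before reading a letter, `spent` after reading exactly one. -/
inductive LeftState
  | fresh
  | spent

noncomputable instance : Fintype LeftState := ⟨{.fresh, .spent}, by rintro (_ | _) <;> simp⟩

/-- The first sweep computes the parity of the length.  On odd lengths the automaton turns
back and gets stuck after one letter, so it returns to the left end only on the input `a`. -/
def evenOrSingle : SRFA Unit RightState LeftState where
  start := .even
  nextP _ q := match q with
    | .even => some .odd
    | .odd => some .even
    | .single => some .single
  nextM _ q := match q with
    | .fresh => some .spent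
    | .spent => none
  startT := some .even
  turnL q := match q with
    | .fresh => none
    | .spent => some .single
  turnR q := match q with
    | .odd => some .fresh
    | _ => none
  injP := by rintro - (_ | _ | _) (_ | _ | _) (_ | _ | _) <;> simp
  injM := by rintro - (_ | _) (_ | _) (_ | _) <;> simp
  injL := by rintro (_ | _) (_ | _) (_ | _ | _) <;> simp
  injR := by rintro (_ | _ | _) (_ | _ | _) (_ | _) <;> simp
  startT_ne_turnL := by rintro (_ | _) (_ | _ | _) <;> simp

/-- What each state says about the head position `i` on an input of length `n`. -/
def ConfigInvariant (n : ℕ) : (RightState ⊕ LeftState) × ℕ → Prop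
  | (Sum.inl .even, i) => i = 0 ∨ i % 2 = 1
  | (Sum.inl .odd, i) => i % 2 = 0
  | (Sum.inl .single, _) => n = 1
  | (Sum.inr .fresh, i) => i = n
  | (Sum.inr .spent, i) => i + 1 = n

theorem ConfigInvariant.step {w : List Unit} {c d : (RightState ⊕ LeftState) × ℕ}
    (hc : ConfigInvariant w.length c) (h : evenOrSingle.step w c = some d) :
    ConfigInvariant w.length d := by
  obtain ⟨(_ | _ | _) | (_ | _), i⟩ := c <;>
    simp only [SRFA.step, evenOrSingle] at h <;> split_ifs at h <;>
    simp [Option.bind_eq_some_iff] at h <;> simp only [ConfigInvariant] at hc <;>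
    grind [ConfigInvariant]

theorem configInvariant_of_steps {w : List Unit} {m : ℕ} {c : (RightState ⊕ LeftState) × ℕ}
    (h : evenOrSingle.steps w m = some c) : ConfigInvariant w.length c := by
  induction m generalizing c with
  | zero =>
    obtain rfl : _ = c := by simpa [SRFA.steps] using h
    exact Or.inl rfl
  | succ m ih =>
    obtain ⟨d, hd, hdc⟩ := Option.bind_eq_some_iff.mp h
    exact (ih hd).step hdc

theorem evenOrSingle_steps_of_le {w : List Unit} {i : ℕ} (hi : i ≤ w.length) :
    evenOrSingle.steps w (i + 1) =
      some (Sum.inl (if i % 2 = 0 then .even else .odd), i + 1) := by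
  induction i with
  | zero => simp [SRFA.steps, SRFA.step, evenOrSingle]
  | succ i ih =>
    rw [SRFA.steps, ih (by omega)]
    have hne : i ≠ w.length := by omega
    have hlt : i < w.length := by omega
    rcases Nat.mod_two_eq_zero_or_one i with h | h
    · have h' : (i + 1) % 2 = 1 := by omega
      simp [SRFA.step, evenOrSingle, h, h', hne, hlt]
    · have h' : (i + 1) % 2 = 0 := by omega
      simp [SRFA.step, evenOrSingle, h, h', hne, hlt]

theorem evenOrSingle_langR : evenOrSingle.LangR {.even, .single} = LevenOrA := by
  ext w
  constructor
  · rintro ⟨m, q, hsteps, hq | hq, -⟩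
    · subst hq
      have h : w.length + 1 = 0 ∨ (w.length + 1) % 2 = 1 := configInvariant_of_steps hsteps
      exact Or.inl (by omega)
    · obtain rfl := Set.mem_singleton_iff.mp hq
      have h : w.length = 1 := configInvariant_of_steps hsteps
      obtain ⟨a, rfl⟩ := List.length_eq_one_iff.mp h
      exact Or.inr rfl
  · rintro (h | rfl)
    · exact ⟨w.length + 1, .even, by simp [evenOrSingle_steps_of_le le_rfl, h], by simp,
        by simp [SRFA.step, evenOrSingle]⟩
    · exact ⟨6, .single, by simp [SRFA.steps, SRFA.step, evenOrSingle], by simp,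
        by simp [SRFA.step, evenOrSingle]⟩

/-- `(aa)* ∪ {a}` is recognized by some sweeping reversible
automaton. -/
theorem stmt8 : RecSRFA Unit LevenOrA :=
  ⟨RightState, LeftState, inferInstance, inferInstance, evenOrSingle, _, evenOrSingle_langR⟩
end
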